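/- arXiv:0809.2427 — 2 statements merged into one kernel-verified Lean document; each statement's English description precedes it below -/
import Mathlib

section
/- Let V be a complex inner product space and let x, y ∈ V be linearly independent vectors with |x|² = |y|² = 3 and ⟨x,y⟩ ∈ θℤ[ω]. Then exactly one of the following holds: either ⟨x,y⟩ = 0, in which case the ω-reflections satisfy φ_x φ_y = φ_y φ_x; or |⟨x,y⟩|² = 3 (i.e. ⟨x,y⟩ = θ·e for a unit e of ℤ[ω]), in which case φ_x φ_y φ_x = φ_y φ_x φ_y. -/
/- For linearly independent norm-3 vectors x, y with ⟨x,y⟩ ∈ θℤ[ω], exactly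
   one of the following holds: ⟨x,y⟩ = 0 and the ω-reflections in x and y
   commute, or |⟨x,y⟩|² = 3 (i.e. ⟨x,y⟩ = θe for a unit e of ℤ[ω]) and the
   ω-reflections braid. -/

open scoped ComplexInnerProductSpace

set_option synthInstance.maxHeartbeats 1000000
set_option maxHeartbeats 1000000

/-- `ω = e^{2πi/3}`. -/
noncomputable def ω : ℂ := Complex.exp (2 * Real.pi * Complex.I / 3)

/-- `θ = ω - ω̄`. -/
noncomputable def θ : ℂ := ω - starRingEnd ℂ ω

/-- The ring of Eisenstein integers `ℤ[ω]`, as a subring of `ℂ`. -/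
noncomputable def Eis : Subring ℂ := Subring.closure {ω}

/-- The `ω`-reflection in a vector `x`:  `φ_x(y) = y - (1-ω)(⟨x,y⟩/|x|²)x`. -/
noncomputable def omegaRefl {V : Type*} [NormedAddCommGroup V] [InnerProductSpace ℂ V]
    (x : V) : V → V :=
  fun y => y - ((1 - ω) * (⟪x, y⟫ / ⟪x, x⟫)) • x

/-!
Write `φ_v(z) = z - v^∨(z) v` with `v^∨ = (1 - ω)⟨v,·⟩/|v|²`, so that `v^∨(v) = 1 - ω`. Two such
pseudo-reflections commute when `x^∨(y) = y^∨(x) = 0`, and they braid when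
`x^∨(y) y^∨(x) = x^∨(x) - 1 = y^∨(y) - 1`. Since `(1 - ω)² = -3ω`, the latter condition reads
`3 |⟨x,y⟩|² = |x|² |y|²`.

Now put `⟨x,y⟩ = θ a`. Strict Cauchy–Schwarz gives `3 |a|² < 9`, and the norm of an Eisenstein
integer has the form `m² - mn + n²`, which is never `2`; so `|a|²` is `0` or `1`.
-/

section PreReflection

variable {R M : Type*} [CommRing R] [AddCommGroup M] [Module R M]
  {x y : M} {f g : Module.Dual R M}

open Module

lemma commute_preReflection (hfy : f y = 0) (hgx : g x = 0) :
    Commute (preReflection x f) (preReflection y g) := by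
  ext v
  simp only [Module.End.mul_apply, preReflection_apply, map_sub, map_smul, hfy, hgx]
  module

lemma preReflection_braid (hf : f y * g x = f x - 1) (hg : f y * g x = g y - 1) :
    preReflection x f * preReflection y g * preReflection x f =
      preReflection y g * preReflection x f * preReflection y g := by
  ext v
  simp only [Module.End.mul_apply, preReflection_apply, map_sub, map_smul]
  match_scalars
  · ring
  · linear_combination -f v * hf
  · linear_combination g v * hg

end PreReflection

section StrictCauchySchwarz

variable {𝕜 E : Type*} [RCLike 𝕜] [NormedAddCommGroup E] [InnerProductSpace 𝕜 E]

lemma norm_inner_lt_norm_mul_norm_of_linearIndependent {x y : E}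
    (h : LinearIndependent 𝕜 ![x, y]) : ‖inner 𝕜 x y‖ < ‖x‖ * ‖y‖ := by
  refine (norm_inner_le_norm x y).lt_of_ne fun heq => ?_
  have hx : x ≠ 0 := h.ne_zero 0
  have hy : y ≠ 0 := h.ne_zero 1
  obtain ⟨r, -, rfl⟩ := (norm_inner_eq_norm_iff hx hy).1 heq
  exact one_ne_zero (neg_eq_zero.1 (LinearIndependent.pair_iff.1 h r (-1) (by simp)).2)

lemma norm_inner_sq_lt_re_inner_self_mul_of_linearIndependent {x y : E}
    (h : LinearIndependent 𝕜 ![x, y]) :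
    ‖inner 𝕜 x y‖ ^ 2 < RCLike.re (inner 𝕜 x x) * RCLike.re (inner 𝕜 y y) := by
  rw [← norm_sq_eq_re_inner, ← norm_sq_eq_re_inner, ← mul_pow]
  gcongr
  exact norm_inner_lt_norm_mul_norm_of_linearIndependent h

end StrictCauchySchwarz

section EisensteinIntegers

open Complex ComplexConjugate

lemma isPrimitiveRoot_omega : IsPrimitiveRoot ω 3 :=
  isPrimitiveRoot_exp 3 (by norm_num)

lemma omega_sq : ω ^ 2 = -1 - ω := by
  have h := isPrimitiveRoot_omega.geom_sum_eq_zero (by norm_num)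
  simp only [Finset.sum_range_succ, Finset.sum_range_zero] at h
  linear_combination h

lemma conj_omega : conj ω = -1 - ω := by
  rw [← omega_sq, ← inv_eq_conj (isPrimitiveRoot_omega.norm'_eq_one (by norm_num))]
  exact inv_eq_of_mul_eq_one_right (by rw [← pow_succ', isPrimitiveRoot_omega.pow_eq_one])

lemma normSq_add_mul_omega (r s : ℝ) : normSq (r + s * ω) = r ^ 2 - r * s + s ^ 2 := by
  apply ofReal_injective
  rw [← mul_conj]
  simp only [map_add, map_mul, conj_ofReal, conj_omega]
  push_cast
  linear_combination -(s : ℂ) ^ 2 * omega_sq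

lemma normSq_theta : normSq θ = 3 := by
  have h : θ = (1 : ℝ) + (2 : ℝ) * ω := by
    rw [θ, conj_omega]
    push_cast
    ring
  rw [h, normSq_add_mul_omega]
  norm_num

lemma omega_mem_Eis : ω ∈ Eis := Subring.subset_closure rfl

lemma exists_int_add_mul_omega_of_mem_Eis {a : ℂ} (ha : a ∈ Eis) :
    ∃ m n : ℤ, a = m + n * ω := by
  induction ha using Subring.closure_induction with
  | mem a ha => exact ⟨0, 1, by simpa using ha⟩
  | zero => exact ⟨0, 0, by simp⟩
  | one => exact ⟨1, 0, by simp⟩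
  | add a b _ _ iha ihb =>
    obtain ⟨⟨m, n, rfl⟩, ⟨k, l, rfl⟩⟩ := iha, ihb
    exact ⟨m + k, n + l, by push_cast; ring⟩
  | neg a _ iha =>
    obtain ⟨m, n, rfl⟩ := iha
    exact ⟨-m, -n, by push_cast; ring⟩
  | mul a b _ _ iha ihb =>
    obtain ⟨⟨m, n, rfl⟩, ⟨k, l, rfl⟩⟩ := iha, ihb
    refine ⟨m * k - n * l, m * l + n * k - n * l, ?_⟩
    push_cast
    linear_combination (n * l : ℂ) * omega_sq

lemma conj_mem_Eis {a : ℂ} (ha : a ∈ Eis) : conj a ∈ Eis := by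
  suffices h : Eis ≤ Eis.comap (starRingEnd ℂ) from h ha
  rw [Eis, Subring.closure_le, Set.singleton_subset_iff]
  change conj ω ∈ Eis
  rw [conj_omega]
  exact sub_mem (neg_mem (one_mem _)) omega_mem_Eis

lemma sq_sub_mul_add_sq_ne_two (m n : ℤ) : m ^ 2 - m * n + n ^ 2 ≠ 2 := by
  intro h
  have no_solution_mod_four : ∀ s t : ZMod 4, s ^ 2 - s * t + t ^ 2 ≠ 2 := by decide
  exact no_solution_mod_four m n (mod_cast congrArg (Int.cast : ℤ → ZMod 4) h)

lemma eq_zero_or_normSq_eq_one_of_mem_Eis {a : ℂ} (ha : a ∈ Eis) (h : normSq a < 3) :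
    a = 0 ∨ normSq a = 1 := by
  obtain ⟨m, n, rfl⟩ := exists_int_add_mul_omega_of_mem_Eis ha
  have hN : normSq (m + n * ω) = (m ^ 2 - m * n + n ^ 2 : ℤ) := by
    exact_mod_cast normSq_add_mul_omega m n
  have hne := sq_sub_mul_add_sq_ne_two m n
  have hnonneg := normSq_nonneg (m + n * ω)
  rw [← normSq_eq_zero]
  rw [hN] at h hnonneg ⊢
  norm_cast at h hnonneg ⊢
  lia

lemma exists_mem_Eis_mul_eq_one {a : ℂ} (ha : a ∈ Eis) (h : normSq a = 1) :
    ∃ b ∈ Eis, a * b = 1 :=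
  ⟨conj a, conj_mem_Eis ha, by rw [mul_conj, h, ofReal_one]⟩

end EisensteinIntegers

section OmegaReflection

variable {V : Type*} [NormedAddCommGroup V] [InnerProductSpace ℂ V] {x y : V}

/-- The coroot `(1 - ω)⟨x,·⟩/|x|²` of `x`: the linear functional that exhibits the `ω`-reflection
in `x` as the pre-reflection `v ↦ v - omegaCoroot x v • x`. -/
noncomputable def omegaCoroot (x : V) : Module.Dual ℂ V :=
  ((1 - ω) / ⟪x, x⟫) • (innerSL ℂ x).toLinearMap

lemma omegaCoroot_apply (x v : V) : omegaCoroot x v = (1 - ω) / ⟪x, x⟫ * ⟪x, v⟫ := rfl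

lemma omegaCoroot_self (hx : x ≠ 0) : omegaCoroot x x = 1 - ω :=
  div_mul_cancel₀ _ (inner_self_ne_zero.2 hx)

lemma omegaRefl_eq_preReflection (x : V) :
    omegaRefl x = Module.preReflection x (omegaCoroot x) := by
  funext v
  rw [omegaRefl, Module.preReflection_apply, omegaCoroot_apply, div_mul_eq_mul_div, mul_div_assoc]

lemma omegaRefl_comp_comm (h : ⟪x, y⟫ = 0) :
    omegaRefl x ∘ omegaRefl y = omegaRefl y ∘ omegaRefl x := by
  have hcomm : Commute (Module.preReflection x (omegaCoroot x))
      (Module.preReflection y (omegaCoroot y)) :=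
    commute_preReflection (by rw [omegaCoroot_apply, h, mul_zero])
      (by rw [omegaCoroot_apply, inner_eq_zero_symm.1 h, mul_zero])
  simpa only [omegaRefl_eq_preReflection, Module.End.coe_mul] using
    congrArg DFunLike.coe hcomm.eq

lemma omegaCoroot_mul_omegaCoroot_eq_neg_omega (hx : x ≠ 0) (hy : y ≠ 0)
    (h : 3 * (Complex.normSq ⟪x, y⟫ : ℂ) = ⟪x, x⟫ * ⟪y, y⟫) :
    omegaCoroot x y * omegaCoroot y x = -ω := by
  have hxx : ⟪x, x⟫ ≠ 0 := inner_self_ne_zero.2 hx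
  have hyy : ⟪y, y⟫ ≠ 0 := inner_self_ne_zero.2 hy
  have hprod : 3 * (⟪x, y⟫ * ⟪y, x⟫) = ⟪x, x⟫ * ⟪y, y⟫ := by
    rw [← inner_conj_symm y x, Complex.mul_conj, h]
  have hsq : (1 - ω) ^ 2 = -3 * ω := by linear_combination omega_sq
  calc omegaCoroot x y * omegaCoroot y x
      = (1 - ω) ^ 2 * (⟪x, y⟫ * ⟪y, x⟫) / (⟪x, x⟫ * ⟪y, y⟫) := by
        rw [omegaCoroot_apply, omegaCoroot_apply]
        ring
    _ = -ω * (3 * (⟪x, y⟫ * ⟪y, x⟫)) / (⟪x, x⟫ * ⟪y, y⟫) := by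
        rw [hsq]
        ring
    _ = -ω := by rw [hprod, mul_div_cancel_right₀ _ (mul_ne_zero hxx hyy)]

lemma omegaRefl_braid (hx : x ≠ 0) (hy : y ≠ 0)
    (h : 3 * (Complex.normSq ⟪x, y⟫ : ℂ) = ⟪x, x⟫ * ⟪y, y⟫) :
    omegaRefl x ∘ omegaRefl y ∘ omegaRefl x = omegaRefl y ∘ omegaRefl x ∘ omegaRefl y := by
  have hprod := omegaCoroot_mul_omegaCoroot_eq_neg_omega hx hy h
  have hbraid := preReflection_braid (hprod.trans (by rw [omegaCoroot_self hx]; ring))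
    (hprod.trans (by rw [omegaCoroot_self hy]; ring))
  simpa only [omegaRefl_eq_preReflection, Module.End.coe_mul, Function.comp_assoc] using
    congrArg DFunLike.coe hbraid

end OmegaReflection

theorem commute_or_braid
    {V : Type*} [NormedAddCommGroup V] [InnerProductSpace ℂ V]
    (x y : V) (hind : LinearIndependent ℂ ![x, y])
    (hx : ⟪x, x⟫ = 3) (hy : ⟪y, y⟫ = 3)
    (hxy : ∃ a ∈ Eis, ⟪x, y⟫ = θ * a) :
    Xor'
      (⟪x, y⟫ = 0 ∧ omegaRefl x ∘ omegaRefl y = omegaRefl y ∘ omegaRefl x)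
      ((Complex.normSq ⟪x, y⟫ = 3 ∧
        ∃ e ∈ Eis, (∃ f ∈ Eis, e * f = 1) ∧ ⟪x, y⟫ = θ * e) ∧
       omegaRefl x ∘ omegaRefl y ∘ omegaRefl x =
         omegaRefl y ∘ omegaRefl x ∘ omegaRefl y) := by
  obtain ⟨a, ha, hxa⟩ := hxy
  have normSq_inner : Complex.normSq ⟪x, y⟫ = 3 * Complex.normSq a := by
    rw [hxa, map_mul, normSq_theta]
  have normSq_inner_lt : Complex.normSq ⟪x, y⟫ < 9 := by
    have h := norm_inner_sq_lt_re_inner_self_mul_of_linearIndependent hind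
    rw [← Complex.normSq_eq_norm_sq, hx, hy, RCLike.ofNat_re] at h
    linarith
  rcases eq_zero_or_normSq_eq_one_of_mem_Eis ha (by linarith) with rfl | ha_one
  · have inner_zero : ⟪x, y⟫ = 0 := by rw [hxa, mul_zero]
    refine Or.inl ⟨⟨inner_zero, omegaRefl_comp_comm inner_zero⟩, ?_⟩
    rintro ⟨⟨h, -⟩, -⟩
    simp [inner_zero] at h
  · have normSq_three : Complex.normSq ⟪x, y⟫ = 3 := by rw [normSq_inner, ha_one, mul_one]
    refine Or.inr ⟨⟨⟨normSq_three, a, ha, exists_mem_Eis_mul_eq_one ha ha_one, hxa⟩,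
      omegaRefl_braid (hind.ne_zero 0) (hind.ne_zero 1) ?_⟩, ?_⟩
    · rw [normSq_three, hx, hy, Complex.ofReal_ofNat]
    · rintro ⟨h, -⟩
      simp [h] at normSq_three
end

section
/- Let x, y, z be elements of a group G and assume x braids with both y and z: xyx = yxy and xzx = zxz. Then the following are equivalent: (i) xyzxyz = yzxyzx (the relation rel_6(x,y,z)); (ii) xyx⁻¹ braids with z; (iii) yzy⁻¹ braids with x; (iv) zxz⁻¹ braids with y. -/
/-!
If `x` braids with `y`, then `x * y * x⁻¹ = y⁻¹ * x * y`, so conjugation by `y` carries the pair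
`(x * y * x⁻¹, z)` to `(x, y * z * y⁻¹)`. Using this for `(x, y, z)` and for `(z, x, y)` identifies
the three braid conditions with one another. With `a = x * y * x⁻¹`, the two sides of
`rel_6(x, y, z)` are `y * (a * z * a) * (x * z)` and `y * (z * a * z) * (x * z)`, and cancellation
identifies that relation with the first braid condition.
-/

/-- Two elements braid if they satisfy the length-three relation of the standard generators of the
braid group on three strands. -/
def Braids {M : Type*} [Mul M] (x y : M) : Prop :=
  x * y * x = y * x * y

/-- The relation `rel_6(x, y, z)`, in which the indices are read modulo three: the cyclic word in
`x, y, z` of length six takes the same value when started at `x` and when started at `y`. -/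
def Rel6 {M : Type*} [Mul M] (x y z : M) : Prop :=
  x * y * z * x * y * z = y * z * x * y * z * x

theorem Braids.symm {M : Type*} [Mul M] {x y : M} (h : Braids x y) : Braids y x :=
  Eq.symm h

theorem braids_comm {M : Type*} [Mul M] {x y : M} : Braids x y ↔ Braids y x :=
  ⟨Braids.symm, Braids.symm⟩

theorem braids_map_iff {M N F : Type*} [Mul M] [Mul N] [FunLike F M N] [MulHomClass F M N]
    {f : F} (hf : Function.Injective f) {x y : M} : Braids (f x) (f y) ↔ Braids x y := by
  simp only [Braids, ← map_mul, hf.eq_iff]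

section Group

variable {G : Type*} [Group G] {x y z : G}

theorem braids_conj_iff (g : G) : Braids (g * x * g⁻¹) (g * y * g⁻¹) ↔ Braids x y :=
  braids_map_iff (MulAut.conj g).injective

namespace Braids

theorem conj_eq_inv_conj (h : Braids x y) : x * y * x⁻¹ = y⁻¹ * x * y := by
  rw [mul_inv_eq_iff_eq_mul, mul_assoc y⁻¹, mul_assoc y⁻¹, eq_inv_mul_iff_mul_eq, ← mul_assoc]
  exact h.symm

theorem braids_conj_rotate (h : Braids x y) (z : G) :
    Braids (x * y * x⁻¹) z ↔ Braids (y * z * y⁻¹) x := by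
  have conj_back : y * (x * y * x⁻¹) * y⁻¹ = x := by
    rw [h.conj_eq_inv_conj]
    group
  rw [← braids_conj_iff y, conj_back, braids_comm]

theorem rel6_left_eq (h : Braids x y) (z : G) :
    x * y * z * x * y * z = y * ((x * y * x⁻¹) * z * (x * y * x⁻¹)) * (x * z) :=
  calc
    x * y * z * x * y * z = y * ((y⁻¹ * x * y) * z * (x * y * x⁻¹)) * (x * z) := by group
    _ = y * ((x * y * x⁻¹) * z * (x * y * x⁻¹)) * (x * z) := by rw [← h.conj_eq_inv_conj]

theorem rel6_right_eq (h : Braids x z) (y : G) :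
    y * z * x * y * z * x = y * (z * (x * y * x⁻¹) * z) * (x * z) :=
  calc
    y * z * x * y * z * x = y * z * x * y * (z * x * z⁻¹) * z := by group
    _ = y * z * x * y * (x⁻¹ * z * x) * z := by rw [h.symm.conj_eq_inv_conj]
    _ = y * (z * (x * y * x⁻¹) * z) * (x * z) := by group

theorem rel6_iff_braids_conj (hxy : Braids x y) (hxz : Braids x z) :
    Rel6 x y z ↔ Braids (x * y * x⁻¹) z := by
  rw [Rel6, hxy.rel6_left_eq, hxz.rel6_right_eq, mul_left_inj, mul_right_inj, Braids]

end Braids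

end Group

theorem rel6_characterizations
    {G : Type*} [Group G] (x y z : G)
    (hxy : x * y * x = y * x * y)
    (hxz : x * z * x = z * x * z) :
    ((x * y * z * x * y * z = y * z * x * y * z * x) ↔
      (x * y * x⁻¹) * z * (x * y * x⁻¹) = z * (x * y * x⁻¹) * z) ∧
    ((x * y * z * x * y * z = y * z * x * y * z * x) ↔
      (y * z * y⁻¹) * x * (y * z * y⁻¹) = x * (y * z * y⁻¹) * x) ∧
    ((x * y * z * x * y * z = y * z * x * y * z * x) ↔
      (z * x * z⁻¹) * y * (z * x * z⁻¹) = y * (z * x * z⁻¹) * y) := by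
  replace hxy : Braids x y := hxy
  replace hxz : Braids x z := hxz
  have rel6_iff : Rel6 x y z ↔ Braids (x * y * x⁻¹) z := hxy.rel6_iff_braids_conj hxz
  exact ⟨rel6_iff, rel6_iff.trans (hxy.braids_conj_rotate z),
    rel6_iff.trans (hxz.symm.braids_conj_rotate y).symm⟩
end
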